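/- arXiv:2302.09241 — 3 statements merged into one kernel-verified Lean document; each statement's English description precedes it below -/
import Mathlib

section
/- Let n ≥ 1, let L ∈ ℝ^{n×n} be symmetric positive semidefinite with kernel exactly span{1_n} (the Laplacian of a connected undirected weighted graph), let k ≥ 0, let S ∈ ℝ^{n×n} be diagonal with positive diagonal entries, and let λ̄, ζ̄, Q̄ ∈ ℝ^n. If L·λ̄ = 0 and 0 = −k·L·λ̄ − L·ζ̄ + (S⁻¹·Q̄ − λ̄), then λ̄ = α_Q·1_n, where α_Q = (1/n)·1_nᵀ·S⁻¹·Q̄. -/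
open Matrix

/-- Lemma 1, eq. (14b): steady-state primal variable is consensual.
`L` is the Laplacian of a connected undirected weighted graph: symmetric positive
semidefinite with kernel exactly `span{1_n}`. If `L·λ̄ = 0` and
`0 = −k·L·λ̄ − L·ζ̄ + (S⁻¹·Q̄ − λ̄)`, then `λ̄ = α_Q·1_n` with
`α_Q = (1/n)·1_nᵀ·S⁻¹·Q̄`. -/
theorem stmt_1 (n : ℕ) (hn : 1 ≤ n)
    (L : Matrix (Fin n) (Fin n) ℝ)
    (hLsym : L.IsSymm) (hLpsd : L.PosSemidef)
    (hLker : ∀ x : Fin n → ℝ, L *ᵥ x = 0 ↔ ∃ c : ℝ, x = fun _ => c)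
    (k : ℝ) (hk : 0 ≤ k)
    (S : Matrix (Fin n) (Fin n) ℝ) (s : Fin n → ℝ)
    (hS : S = Matrix.diagonal s) (hs : ∀ i, 0 < s i)
    (lam zeta Qbar : Fin n → ℝ)
    (h1 : L *ᵥ lam = 0)
    (h2 : (0 : Fin n → ℝ) = -(k • (L *ᵥ lam)) - L *ᵥ zeta + (S⁻¹ *ᵥ Qbar - lam)) :
    lam = fun _ => (1 / (n : ℝ)) * ∑ i, (S⁻¹ *ᵥ Qbar) i := by
  obtain ⟨c, hc⟩ := (hLker lam).1 h1
  have hone : L *ᵥ (fun _ => (1 : ℝ)) = 0 := (hLker _).2 ⟨1, rfl⟩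
  have hz : ∑ i, (L *ᵥ zeta) i = 0 := by
    have h : (fun _ => (1 : ℝ)) ⬝ᵥ (L *ᵥ zeta) = 0 := by
      rw [Matrix.dotProduct_mulVec, ← Matrix.mulVec_transpose, hLsym.eq, hone, zero_dotProduct]
    simpa [dotProduct] using h
  have hq : ∀ i, (S⁻¹ *ᵥ Qbar) i = c + (L *ᵥ zeta) i := by
    intro i
    have h := congrFun h2 i
    rw [h1] at h
    simp only [hc, Pi.add_apply, Pi.sub_apply, Pi.neg_apply, Pi.zero_apply, smul_zero] at h
    linarith
  have hn0 : (n : ℝ) ≠ 0 := by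
    have : n ≠ 0 := by omega
    exact_mod_cast this
  have hsum : ∑ i, (S⁻¹ *ᵥ Qbar) i = n * c := by
    rw [Finset.sum_congr rfl (fun i _ => hq i), Finset.sum_add_distrib, hz]
    simp
  rw [hsum, hc]
  funext _
  field_simp
end

section
/- Let n ≥ 2, let L ∈ ℝ^{n×n} be symmetric positive semidefinite with kernel exactly span{1_n}, let k > 0 and τ_v > 0, set K = (I_n + k·L)⁻¹, let T ∈ ℝ^{n×n} be the matrix whose first row is (1/n, …, 1/n) and whose i-th row, for i = 2, …, n, has −1 in column i−1, +1 in column i, and zeros elsewhere, and let I_r = [0_{n−1} I_{n−1}] ∈ ℝ^{(n−1)×n}. Define R_ζ = −τ_v⁻¹·I_r·T·(L·K·L)·T⁻¹·I_rᵀ ∈ ℝ^{(n−1)×(n−1)}. Then every eigenvalue of R_ζ is a negative real number; in particular R_ζ is a Hurwitz matrix (all eigenvalues have negative real part) and is invertible. -/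
open Matrix

open scoped ComplexOrder MatrixOrder in
theorem aux_spec {m n : ℕ} (M : Matrix (Fin n) (Fin n) ℝ) (hM : M.PosSemidef)
    (A : Matrix (Fin m) (Fin n) ℝ) (B : Matrix (Fin n) (Fin m) ℝ)
    (R : Matrix (Fin m) (Fin m) ℝ) (t : ℝ) (ht : 0 < t)
    (hAB : A * B = 1) (hBR : B * R = -(t • (M * B)))
    (hker : ∀ x, M *ᵥ x = 0 → A *ᵥ x = 0) :
    (∀ μ : ℂ, μ ∈ spectrum ℂ (R.map (Complex.ofReal ·)) → μ.re < 0 ∧ μ.im = 0) := by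
  intro μ hμ
  obtain ⟨C, hC⟩ : ∃ C : Matrix (Fin n) (Fin n) ℝ, M = Cᴴ * C :=
    CStarAlgebra.nonneg_iff_eq_star_mul_self.mp hM.nonneg
  obtain ⟨v, hv0, hv⟩ : ∃ v : Fin m → ℂ, v ≠ 0 ∧ (R.map Complex.ofRealHom) *ᵥ v = μ • v := by
    rw [spectrum.mem_iff, Matrix.isUnit_iff_isUnit_det, isUnit_iff_ne_zero, not_not,
      ← Matrix.exists_mulVec_eq_zero_iff] at hμ
    obtain ⟨v, hv0, hv⟩ := hμ
    refine ⟨v, hv0, ?_⟩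
    rw [Matrix.sub_mulVec, sub_eq_zero, Algebra.algebraMap_eq_smul_one, Matrix.smul_mulVec,
      Matrix.one_mulVec] at hv
    exact hv.symm
  set f := Complex.ofRealHom with hf
  set w := B.map f *ᵥ v with hw
  have hAw : A.map f *ᵥ w = v := by
    rw [hw, Matrix.mulVec_mulVec, ← Matrix.map_mul, hAB, Matrix.map_one _ (map_zero f) (map_one f),
      Matrix.one_mulVec]
  have hMw : μ • w = -((t : ℂ) • (M.map f *ᵥ w)) := by
    have h1 : B.map f *ᵥ (R.map f *ᵥ v) = μ • w := by
      rw [hv, Matrix.mulVec_smul]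
    rw [← h1, Matrix.mulVec_mulVec, ← Matrix.map_mul, hBR, hw, Matrix.mulVec_mulVec,
      ← Matrix.map_mul (L := M), ← Matrix.smul_mulVec, ← Matrix.neg_mulVec]
    congr 1
    ext i j
    simp [hf, Matrix.mul_apply]
  have hMC : M.map f = (C.map f)ᴴ * C.map f := by
    rw [hC, Matrix.map_mul]
    congr 1
    ext i j
    simp [hf]
  have hw0 : w ≠ 0 := by
    intro h
    rw [h, Matrix.mulVec_zero] at hAw
    exact hv0 hAw.symm
  have hCw : C.map f *ᵥ w ≠ 0 := by
    intro h
    have hM0 : M.map f *ᵥ w = 0 := by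
      rw [hMC, ← Matrix.mulVec_mulVec, h, Matrix.mulVec_zero]
    have hre : ∀ {p : ℕ} (X : Matrix (Fin p) (Fin n) ℝ) (i), ((X.map f *ᵥ w) i).re
        = (X *ᵥ (fun j => (w j).re)) i := by
      intro p X i
      simp [Matrix.mulVec, dotProduct, hf]
    have him : ∀ {p : ℕ} (X : Matrix (Fin p) (Fin n) ℝ) (i), ((X.map f *ᵥ w) i).im
        = (X *ᵥ (fun j => (w j).im)) i := by
      intro p X i
      simp [Matrix.mulVec, dotProduct, hf]
    have h1 := hker (fun j => (w j).re) (by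
      ext i; rw [← hre, hM0]; simp)
    have h2 := hker (fun j => (w j).im) (by
      ext i; rw [← him, hM0]; simp)
    apply hv0
    rw [← hAw]
    ext i
    apply Complex.ext
    · rw [hre, h1]; simp
    · rw [him, h2]; simp
  have key : μ * (star w ⬝ᵥ w) = -((t : ℂ) * (star (C.map f *ᵥ w) ⬝ᵥ (C.map f *ᵥ w))) := by
    have := congrArg (fun z => star w ⬝ᵥ z) hMw
    simp only [dotProduct_smul, dotProduct_neg, smul_eq_mul] at this
    rw [this, hMC, ← Matrix.mulVec_mulVec, Matrix.dotProduct_mulVec, Matrix.star_mulVec _ w]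
  have hpos : ∀ z : Fin n → ℂ, z ≠ 0 → ∃ r : ℝ, 0 < r ∧ star z ⬝ᵥ z = (r : ℂ) := by
    intro z hz
    have h := Matrix.dotProduct_star_self_pos_iff.mpr hz
    rw [Complex.lt_def] at h
    exact ⟨(star z ⬝ᵥ z).re, h.1, Complex.ext rfl h.2.symm⟩
  obtain ⟨a, ha, ha'⟩ := hpos w hw0
  obtain ⟨b, hb, hb'⟩ := hpos _ hCw
  rw [ha', hb'] at key
  have k1 := congrArg Complex.re key
  have k2 := congrArg Complex.im key
  simp at k1 k2
  refine ⟨?_, ?_⟩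
  · have := mul_pos ht hb
    by_contra! hc
    nlinarith [mul_nonneg hc ha.le]
  · rcases k2 with h | h
    · exact h
    · exact absurd h ha.ne'

/-- boundary-layer matrix `R_ζ` of (31c) is Hurwitz: with
`L` the Laplacian (symmetric PSD, kernel exactly `span{1_n}`), `k > 0`,
`τ_v > 0`, `K = (I + k·L)⁻¹`, `T` the transformation matrix (27), and
`I_r = [0 I_{n−1}]`, the matrix `R_ζ = −τ_v⁻¹·I_r·T·(L·K·L)·T⁻¹·I_rᵀ` has all
its (complex) eigenvalues real and negative; in particular it is Hurwitz and
invertible. -/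
theorem stmt_13 (n : ℕ) (hn : 2 ≤ n)
    (L : Matrix (Fin n) (Fin n) ℝ)
    (hLsym : L.IsSymm) (hLpsd : L.PosSemidef)
    (hLker : ∀ x : Fin n → ℝ, L *ᵥ x = 0 ↔ ∃ c : ℝ, x = fun _ => c)
    (k τv : ℝ) (hk : 0 < k) (hτv : 0 < τv)
    (T : Matrix (Fin n) (Fin n) ℝ)
    (hT : ∀ i j : Fin n, T i j =
      if (i : ℕ) = 0 then 1 / (n : ℝ)
      else if j = i then 1
      else if (j : ℕ) + 1 = (i : ℕ) then -1
      else 0)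
    (Ir : Matrix (Fin (n - 1)) (Fin n) ℝ)
    (hIr : ∀ (i : Fin (n - 1)) (j : Fin n), Ir i j =
      if (j : ℕ) = (i : ℕ) + 1 then 1 else 0)
    (Rζ : Matrix (Fin (n - 1)) (Fin (n - 1)) ℝ)
    (hRζ : Rζ = -(τv⁻¹ • (Ir * T * (L * (1 + k • L)⁻¹ * L) * T⁻¹ * Irᵀ))) :
    (∀ μ : ℂ, μ ∈ spectrum ℂ (Rζ.map (Complex.ofReal ·)) → μ.re < 0 ∧ μ.im = 0) ∧
    IsUnit Rζ := by
  have hTL0 : ∀ j, ∑ i, L i j = 0 := by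
    intro j
    have h := (hLker (fun _ => 1)).mpr ⟨1, rfl⟩
    have h := congrFun h j
    simp only [Matrix.mulVec, dotProduct, mul_one, Pi.zero_apply] at h
    rw [← h]
    exact Finset.sum_congr rfl fun i _ => hLsym.apply j i
  have hTrow : ∀ (x : Fin n → ℝ) (i : Fin n) (hi : (i : ℕ) ≠ 0),
      (T *ᵥ x) i = x i - x ⟨i - 1, by omega⟩ := by
    intro x i hi
    have : ∀ j, T i j = (if j = i then 1 else 0) - (if j = ⟨i - 1, by omega⟩ then 1 else 0) := by
      intro j
      rw [hT, if_neg hi]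
      simp only [Fin.ext_iff]
      split_ifs <;> first | omega | simp
    simp [Matrix.mulVec, dotProduct, this, sub_mul]
  have hconst : ∀ x : Fin n → ℝ, (∀ i : Fin n, (i : ℕ) ≠ 0 → (T *ᵥ x) i = 0) →
      ∀ i, x i = x ⟨0, by omega⟩ := by
    intro x h
    have : ∀ (m : ℕ) (hm : m < n), x ⟨m, hm⟩ = x ⟨0, by omega⟩ := by
      intro m
      induction m with
      | zero => intro _; rfl
      | succ p ih =>
        intro hm
        have h1 := h ⟨p + 1, hm⟩ (by simp)
        rw [hTrow _ _ (by simp)] at h1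
        rw [← ih (by omega)]
        simpa [sub_eq_zero] using h1
    intro i
    exact this i i.2
  have hTdet : IsUnit T.det := by
    rw [isUnit_iff_ne_zero]
    intro h0
    obtain ⟨x, hx0, hx⟩ := Matrix.exists_mulVec_eq_zero_iff.mpr h0
    have hc := hconst x (fun i _ => by rw [hx]; rfl)
    have h1 := congrFun hx ⟨0, by omega⟩
    have hnn : (n : ℝ) ≠ 0 := by
      have : n ≠ 0 := by omega
      exact_mod_cast this
    apply hx0
    ext i
    rw [hc i]
    simp only [Matrix.mulVec, dotProduct, hT, Pi.zero_apply] at h1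
    simp_rw [hc] at h1
    simpa [hnn] using h1
  have hIrm : ∀ {p : ℕ} (X : Matrix (Fin n) (Fin p) ℝ) i j,
      (Ir * X) i j = X ⟨i + 1, by omega⟩ j := by
    intro p X i j
    have : ∀ l, Ir i l = if l = ⟨i + 1, by omega⟩ then 1 else 0 := by
      intro l
      rw [hIr]
      simp only [Fin.ext_iff]
    simp [Matrix.mul_apply, this]
  have hIrI : Ir * Irᵀ = 1 := by
    ext i j
    rw [hIrm, Matrix.transpose_apply, hIr, Matrix.one_apply]
    simp [Fin.ext_iff]
  have hP : Irᵀ * (Ir * (T * L)) = T * L := by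
    ext i j
    rw [Matrix.mul_apply]
    simp only [hIrm, Matrix.transpose_apply, hIr]
    by_cases hi : (i : ℕ) = 0
    · rw [Finset.sum_eq_zero]
      · rw [Matrix.mul_apply]
        simp only [hT, hi, if_true]
        rw [← Finset.mul_sum, hTL0, mul_zero]
      · intro l _
        rw [if_neg (by omega), zero_mul]
    · rw [Finset.sum_eq_single ⟨i - 1, by omega⟩]
      · have : (⟨(i : ℕ) - 1 + 1, by omega⟩ : Fin n) = i := by
          ext; simp; omega
        simp only [this]
        rw [if_pos (by omega), one_mul]
      · intro l _ hl
        rw [if_neg, zero_mul]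
        intro h
        apply hl
        ext
        simp
        omega
      · simp
  have hKpd : ((1 + k • L)⁻¹).PosDef :=
    (Matrix.PosDef.one.add_posSemidef (hLpsd.smul hk.le)).inv
  have hLH : Lᴴ = L := hLpsd.1
  set K := (1 + k • L)⁻¹ with hK
  have hM : (L * K * L).PosSemidef := by
    have := hKpd.posSemidef.conjTranspose_mul_mul_same L
    rwa [hLH] at this
  have hTT : T * T⁻¹ = 1 := Matrix.mul_nonsing_inv _ hTdet
  have hTT' : T⁻¹ * T = 1 := Matrix.nonsing_inv_mul _ hTdet
  have hspec := aux_spec (L * K * L) hM (Ir * T) (T⁻¹ * Irᵀ) Rζ τv⁻¹ (inv_pos.mpr hτv)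
    (by rw [Matrix.mul_assoc, ← Matrix.mul_assoc T, hTT, Matrix.one_mul, hIrI])
    (by
      have h1 : T⁻¹ * Irᵀ * (Ir * T * (L * K * L) * T⁻¹ * Irᵀ)
          = T⁻¹ * (Irᵀ * (Ir * (T * L))) * (K * L * T⁻¹ * Irᵀ) := by
        simp only [Matrix.mul_assoc]
      rw [hRζ, Matrix.mul_neg, Matrix.mul_smul, h1, hP, ← Matrix.mul_assoc T⁻¹, hTT',
        Matrix.one_mul]
      simp only [Matrix.mul_assoc])
    (by
      intro x hx
      have hLx : L *ᵥ x = 0 := by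
        by_contra hne
        have h := hKpd.dotProduct_mulVec_pos hne
        have h2 : star (L *ᵥ x) ⬝ᵥ K *ᵥ (L *ᵥ x) = star x ⬝ᵥ ((L * K * L) *ᵥ x) := by
          rw [Matrix.star_mulVec, hLH, ← Matrix.dotProduct_mulVec, Matrix.mulVec_mulVec,
            Matrix.mulVec_mulVec, Matrix.mul_assoc]
        rw [h2, hx, dotProduct_zero] at h
        exact lt_irrefl _ h
      obtain ⟨c, rfl⟩ := (hLker x).mp hLx
      rw [← Matrix.mulVec_mulVec]
      ext i
      rw [Matrix.mulVec, dotProduct]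
      apply Finset.sum_eq_zero
      intro j _
      rw [hIr]
      split_ifs with h
      · rw [hTrow _ _ (by omega)]; simp
      · simp)
  refine ⟨hspec, ?_⟩
  by_contra hu
  have h0 : (0 : ℂ) ∈ spectrum ℂ (Rζ.map (Complex.ofReal ·)) := by
    rw [spectrum.zero_mem_iff, Matrix.isUnit_iff_isUnit_det, isUnit_iff_ne_zero, not_not]
    rw [Matrix.isUnit_iff_isUnit_det, isUnit_iff_ne_zero, not_not] at hu
    have h := RingHom.map_det Complex.ofRealHom Rζ
    rw [hu, map_zero] at h
    exact h.symm
  have := (hspec 0 h0).1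
  simp at this
end

section
/- Let n, m ≥ 1. Let R_θ ∈ ℝ^{m×m}, R_{θV} ∈ ℝ^{m×n}, R_{vθ} ∈ ℝ^{n×m}, R_{vV} ∈ ℝ^{n×n}, d_θ ∈ ℝ^m, d_v ∈ ℝ^n, β ∈ ℝ, V⋆ ∈ ℝ^n, and let Δ = diag(Δ_1, …, Δ_n) with Δ_i > 0. For v ∈ ℝ^n set V(v) = V⋆ + Δ·tanh(Δ⁻¹v) (componentwise) and ρ(v)·v the vector with components ρ_i(v_i)·v_i, where ρ_i(v) = |v/Δ_i| − 3 if |v| > 3Δ_i and ρ_i(v) = 0 otherwise. Let P_θ ∈ ℝ^{m×m} be symmetric positive definite and D_v ∈ ℝ^{n×n} diagonal positive definite, and define the block matrix Q = [[P_θ·R_θ, P_θ·R_{θV}], [D_v·R_{vθ}, D_v·(R_{vV} − β·I_n)]]. Assume Q + Qᵀ is negative definite and let α_s > 0 be the smallest eigenvalue of −(Q + Qᵀ). Let (r̄, v̄) ∈ ℝ^m × ℝ^n be an equilibrium: 0 = R_θ·r̄ + R_{θV}·V(v̄) + d_θ and 0 = R_{vθ}·r̄ + (R_{vV} − β·I_n)·V(v̄)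 − ρ(v̄)·v̄ + d_v. Then for every (r, v) ∈ ℝ^m × ℝ^n, writing r̃ = r − r̄, h̃ = V(v) − V(v̄), and η = (r̃, h̃) ∈ ℝ^{m+n}, the Lyapunov derivative expression satisfies r̃ᵀ·P_θ·(R_θ·r + R_{θV}·V(v) + d_θ) + h̃ᵀ·D_v·(R_{vθ}·r + (R_{vV} − β·I_n)·V(v) − ρ(v)·v + d_v) ≤ −(α_s/2)·‖η‖². -/
open Matrix

/-- The nonlinear leakage (anti-windup) coefficient `ρ` of the integral
controller (4c): `ρ(v) = |v/Δ| − 3` if `|v| > 3Δ`, and `0` otherwise. -/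
noncomputable def leak (Δ v : ℝ) : ℝ := if 3 * Δ < |v| then |v / Δ| - 3 else 0

theorem aux_tanh_mono {x y : ℝ} (h : x ≤ y) : Real.tanh x ≤ Real.tanh y := by
  rw [Real.tanh_eq_sinh_div_cosh, Real.tanh_eq_sinh_div_cosh,
    div_le_div_iff₀ (Real.cosh_pos x) (Real.cosh_pos y)]
  have h1 : 0 ≤ Real.sinh (y - x) := Real.sinh_nonneg_iff.2 (by linarith)
  rw [Real.sinh_sub] at h1
  linarith

theorem aux_leak_eq {D : ℝ} (hD : 0 < D) (v : ℝ) : leak D v = max (|v| / D - 3) 0 := by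
  unfold leak
  rw [abs_div, abs_of_pos hD]
  split_ifs with h
  · rw [max_eq_left]
    have := (le_div_iff₀ hD).2 h.le
    linarith
  · rw [max_eq_right]
    have := (div_le_iff₀ hD).2 (not_lt.1 h)
    linarith

theorem aux_leak_mono {D : ℝ} (hD : 0 < D) {x y : ℝ} (h : x ≤ y) :
    leak D x * x ≤ leak D y * y := by
  rw [aux_leak_eq hD, aux_leak_eq hD]
  have key : ∀ a b : ℝ, |a| ≤ |b| → max (|a| / D - 3) 0 ≤ max (|b| / D - 3) 0 := by
    intro a b hab
    gcongr
  have hx : 0 ≤ max (|x| / D - 3) 0 := le_max_right _ _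
  have hy : 0 ≤ max (|y| / D - 3) 0 := le_max_right _ _
  rcases le_total 0 x with h0 | h0
  · have h1 := key x y (by rw [abs_of_nonneg h0, abs_of_nonneg (h0.trans h)]; exact h)
    exact mul_le_mul h1 h h0 hy
  · rcases le_total 0 y with h2 | h2
    · nlinarith [mul_nonneg hx (neg_nonneg.2 h0), mul_nonneg hy h2]
    · have h1 := key y x (by rw [abs_of_nonpos h0, abs_of_nonpos h2]; linarith)
      nlinarith [mul_le_mul h1 (neg_le_neg h) (neg_nonneg.2 h2) hx]

theorem aux_quad {ι : Type*} [Fintype ι] [DecidableEq ι] (A : Matrix ι ι ℝ)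
    (hA : A.IsHermitian) (a : ℝ) (hmin : ∀ μ ∈ spectrum ℝ A, a ≤ μ) (x : ι → ℝ) :
    a * (x ⬝ᵥ x) ≤ x ⬝ᵥ (A *ᵥ x) := by
  have hps : (A - algebraMap ℝ (Matrix ι ι ℝ) a).PosSemidef := by
    rw [Matrix.posSemidef_iff_isHermitian_and_spectrum_nonneg]
    refine ⟨?_, ?_⟩
    · refine hA.sub ?_
      rw [Matrix.algebraMap_eq_diagonal]
      exact Matrix.isHermitian_diagonal _
    · rw [← spectrum.sub_singleton_eq]
      rintro _ ⟨μ, hμ, _, rfl, rfl⟩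
      exact sub_nonneg.2 (hmin μ hμ)
  have := hps.dotProduct_mulVec_nonneg x
  rw [Algebra.algebraMap_eq_smul_one, Matrix.sub_mulVec, Matrix.smul_mulVec, Matrix.one_mulVec,
    dotProduct_sub, dotProduct_smul, star_trivial, smul_eq_mul] at this
  linarith

/-- Lyapunov decrease estimate (35a)–(38) in the proof of
Theorem 1: for the reduced slow dynamics with saturated voltage
`V(v) = V⋆ + Δ·tanh(Δ⁻¹v)`, if `P_θ ≻ 0` is symmetric, `D_v ≻ 0` is diagonal,
the block matrix `Q = [[P_θR_θ, P_θR_{θV}],[D_vR_{vθ}, D_v(R_{vV} − βI)]]`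
satisfies `Q + Qᵀ ≺ 0` with smallest eigenvalue of `−(Q+Qᵀ)` equal to
`α_s > 0`, and `(r̄, v̄)` is an equilibrium, then for every `(r, v)`, writing
`r̃ = r − r̄`, `h̃ = V(v) − V(v̄)`, `η = (r̃, h̃)`, the Lyapunov derivative
satisfies
`r̃ᵀP_θ(R_θr + R_{θV}V(v) + d_θ) + h̃ᵀD_v(R_{vθ}r + (R_{vV} − βI)V(v) − ρ(v)v + d_v) ≤ −(α_s/2)‖η‖²`. -/
theorem stmt_17 (n m : ℕ) (hn : 1 ≤ n) (hm : 1 ≤ m)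
    (Rθ : Matrix (Fin m) (Fin m) ℝ) (RθV : Matrix (Fin m) (Fin n) ℝ)
    (Rvθ : Matrix (Fin n) (Fin m) ℝ) (RvV : Matrix (Fin n) (Fin n) ℝ)
    (dθ : Fin m → ℝ) (dv : Fin n → ℝ) (β : ℝ)
    (Vstar : Fin n → ℝ) (Δ : Fin n → ℝ) (hΔ : ∀ i, 0 < Δ i)
    -- the componentwise saturated voltage map and leakage term
    (Vfun : (Fin n → ℝ) → (Fin n → ℝ))
    (hVfun : ∀ v i, Vfun v i = Vstar i + Δ i * Real.tanh (v i / Δ i))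
    (ρv : (Fin n → ℝ) → (Fin n → ℝ))
    (hρv : ∀ v i, ρv v i = leak (Δ i) (v i) * v i)
    -- the Lyapunov matrices
    (Pθ : Matrix (Fin m) (Fin m) ℝ) (hPθ : Pθ.PosDef)
    (dvec : Fin n → ℝ) (hdvec : ∀ i, 0 < dvec i)
    (Dv : Matrix (Fin n) (Fin n) ℝ) (hDv : Dv = Matrix.diagonal dvec)
    -- the block matrix `Q` and the LMI `Q + Qᵀ ≺ 0`
    (Q : Matrix (Fin m ⊕ Fin n) (Fin m ⊕ Fin n) ℝ)
    (hQdef : Q = Matrix.fromBlocks (Pθ * Rθ) (Pθ * RθV)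
      (Dv * Rvθ) (Dv * (RvV - β • (1 : Matrix (Fin n) (Fin n) ℝ))))
    (hLMI : (-(Q + Qᵀ)).PosDef)
    -- `α_s > 0` is the smallest eigenvalue of `−(Q + Qᵀ)`
    (αs : ℝ) (hαs : 0 < αs)
    (hαs_mem : αs ∈ spectrum ℝ (-(Q + Qᵀ)))
    (hαs_min : ∀ μ ∈ spectrum ℝ (-(Q + Qᵀ)), αs ≤ μ)
    -- `(r̄, v̄)` is an equilibrium of the reduced slow dynamics
    (rbar : Fin m → ℝ) (vbar : Fin n → ℝ)
    (heq1 : (0 : Fin m → ℝ) = Rθ *ᵥ rbar + RθV *ᵥ Vfun vbar + dθ)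
    (heq2 : (0 : Fin n → ℝ) = Rvθ *ᵥ rbar
      + (RvV - β • (1 : Matrix (Fin n) (Fin n) ℝ)) *ᵥ Vfun vbar - ρv vbar + dv) :
    ∀ (r : Fin m → ℝ) (v : Fin n → ℝ),
      (r - rbar) ⬝ᵥ (Pθ *ᵥ (Rθ *ᵥ r + RθV *ᵥ Vfun v + dθ))
      + (Vfun v - Vfun vbar) ⬝ᵥ (Dv *ᵥ (Rvθ *ᵥ r
          + (RvV - β • (1 : Matrix (Fin n) (Fin n) ℝ)) *ᵥ Vfun v - ρv v + dv))
      ≤ -(αs / 2) *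
          (Sum.elim (r - rbar) (Vfun v - Vfun vbar) ⬝ᵥ
           Sum.elim (r - rbar) (Vfun v - Vfun vbar)) := by
  intro r v
  have e1 : Rθ *ᵥ r + RθV *ᵥ Vfun v + dθ
      = Rθ *ᵥ (r - rbar) + RθV *ᵥ (Vfun v - Vfun vbar) := by
    rw [← sub_zero (Rθ *ᵥ r + RθV *ᵥ Vfun v + dθ), heq1, mulVec_sub, mulVec_sub]
    abel
  have e2 : Rvθ *ᵥ r + (RvV - β • (1 : Matrix (Fin n) (Fin n) ℝ)) *ᵥ Vfun v - ρv v + dv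
      = (Rvθ *ᵥ (r - rbar)
        + (RvV - β • (1 : Matrix (Fin n) (Fin n) ℝ)) *ᵥ (Vfun v - Vfun vbar))
        - (ρv v - ρv vbar) := by
    rw [← sub_zero (Rvθ *ᵥ r + _ - ρv v + dv), heq2, mulVec_sub, mulVec_sub]
    abel
  rw [e1, e2]
  have hmono : 0 ≤ (Vfun v - Vfun vbar) ⬝ᵥ (Dv *ᵥ (ρv v - ρv vbar)) := by
    rw [hDv]
    refine Finset.sum_nonneg fun i _ => ?_
    rw [mulVec_diagonal, Pi.sub_apply, Pi.sub_apply, hVfun, hVfun, hρv, hρv]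
    have hd := hdvec i
    have hD := hΔ i
    rcases le_total (v i) (vbar i) with h | h
    · have h1 := aux_leak_mono hD h
      have h2 := mul_le_mul_of_nonneg_left
        (aux_tanh_mono (div_le_div_of_nonneg_right h hD.le)) hD.le
      exact mul_nonneg_of_nonpos_of_nonpos (by linarith)
        (mul_nonpos_of_nonneg_of_nonpos hd.le (by linarith))
    · have h1 := aux_leak_mono hD h
      have h2 := mul_le_mul_of_nonneg_left
        (aux_tanh_mono (div_le_div_of_nonneg_right h hD.le)) hD.le
      exact mul_nonneg (by linarith) (mul_nonneg hd.le (by linarith))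
  have hq := aux_quad _ hLMI.isHermitian αs hαs_min
    (Sum.elim (r - rbar) (Vfun v - Vfun vbar))
  set x := Sum.elim (r - rbar) (Vfun v - Vfun vbar) with hx
  have hsym : x ⬝ᵥ (Qᵀ *ᵥ x) = x ⬝ᵥ (Q *ᵥ x) := by
    rw [mulVec_transpose, dotProduct_comm, ← dotProduct_mulVec]
  rw [neg_mulVec, add_mulVec, dotProduct_neg, dotProduct_add, hsym] at hq
  have hQx : x ⬝ᵥ (Q *ᵥ x)
      = (r - rbar) ⬝ᵥ (Pθ *ᵥ (Rθ *ᵥ (r - rbar) + RθV *ᵥ (Vfun v - Vfun vbar)))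
      + (Vfun v - Vfun vbar) ⬝ᵥ (Dv *ᵥ (Rvθ *ᵥ (r - rbar)
        + (RvV - β • (1 : Matrix (Fin n) (Fin n) ℝ)) *ᵥ (Vfun v - Vfun vbar))) := by
    rw [hQdef, hx, fromBlocks_mulVec, sumElim_dotProduct_sumElim]
    simp only [Sum.elim_comp_inl, Sum.elim_comp_inr, mulVec_add, mulVec_mulVec]
  rw [mulVec_sub Dv, dotProduct_sub]
  linarith
end
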